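/- Let N be a positive natural number, let A be a 32×33 matrix over ZMod N, let α, β ∈ ZMod N, let t' : Fin 32 → ZMod N, let r : Fin 32 → ZMod N, and let π be a permutation of Fin 32. Define the 33×33 matrix M over ZMod N by M[i][j] = C(i,j)·α^j·β^{i−j} for j ≤ i and M[i][j] = 0 for j > i. Suppose that for a fixed i ∈ Fin 32, the i-th row of A·M equals r(π(i)) at column π(i) (as an element of Fin 33), equals t'(i) at column 32, and equals 0 at every other column. Then for every c ∈ ZMod N, Σ_{j ∈ Fin 33} A[i][j]·(α·c + β)^j − c^{32}·t'(i) = r(π(i))·c^{π(i)}. -/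

import Mathlib

/-- The lower-triangular binomial matrix `M` with `M[i][j] = C(i,j)·α^j·β^(i−j)` for `j ≤ i`. -/
def binomMat {R : Type*} [CommRing R] (α β : R) : Matrix (Fin 33) (Fin 33) R :=
  Matrix.of fun i j =>
    if (j : ℕ) ≤ (i : ℕ) then (Nat.choose i j : R) * α ^ (j : ℕ) * β ^ ((i : ℕ) - (j : ℕ)) else 0

/-!
By the binomial theorem the matrix `M` sends the vector of powers of `c` to the vector of powers of
`α * c + β`. Hence evaluating a row `v` at the powers of `α * c + β` is the same as evaluating
`v ᵥ* M` at the powers of `c`, and only the nonzero entries of `v ᵥ* M` contribute.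
-/

open Matrix

section CommSemiring

variable {R : Type*} [CommSemiring R]

theorem add_pow_eq_sum_range_of_lt (x y : R) {m n : ℕ} (hmn : m < n) :
    (x + y) ^ m = ∑ j ∈ Finset.range n, x ^ j * y ^ (m - j) * (m.choose j : R) := by
  rw [add_pow]
  refine Finset.sum_subset (Finset.range_subset_range.2 hmn) fun j _ hj => ?_
  have hlt : m < j := by simpa [Nat.lt_succ_iff] using hj
  rw [Nat.choose_eq_zero_of_lt hlt, Nat.cast_zero, mul_zero]

/-- The vector `(1, x, …, x ^ (n - 1))`, on which binomial matrices act by affine substitution. -/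
def powVec (n : ℕ) (x : R) : Fin n → R :=
  fun j => x ^ (j : ℕ)

/-- The matrix of the affine substitution `x ↦ α * x + β` on the first `n` powers of `x`, the rows
being indexed by the powers to expand. The entries above the diagonal vanish because the binomial
coefficients do, despite the truncated exponent of `β`. -/
def binomialMatrix (n : ℕ) (α β : R) : Matrix (Fin n) (Fin n) R :=
  of fun i j => ((i : ℕ).choose j : R) * α ^ (j : ℕ) * β ^ ((i : ℕ) - j)

theorem binomialMatrix_mulVec_powVec (n : ℕ) (α β c : R) :
    binomialMatrix n α β *ᵥ powVec n c = powVec n (α * c + β) := by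
  funext i
  calc
    ∑ j : Fin n, ((i : ℕ).choose j : R) * α ^ (j : ℕ) * β ^ ((i : ℕ) - j) * c ^ (j : ℕ)
      = ∑ j : Fin n, (α * c) ^ (j : ℕ) * β ^ ((i : ℕ) - j) * ((i : ℕ).choose j : R) :=
        Finset.sum_congr rfl fun j _ => by ring
    _ = ∑ j ∈ Finset.range n, (α * c) ^ j * β ^ ((i : ℕ) - j) * ((i : ℕ).choose j : R) :=
        Fin.sum_univ_eq_sum_range
          (fun j => (α * c) ^ j * β ^ ((i : ℕ) - j) * ((i : ℕ).choose j : R)) n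
    _ = (α * c + β) ^ (i : ℕ) := (add_pow_eq_sum_range_of_lt _ _ i.isLt).symm

theorem dotProduct_powVec_mul_add {n : ℕ} (v : Fin n → R) (α β c : R) :
    v ⬝ᵥ powVec n (α * c + β) = (v ᵥ* binomialMatrix n α β) ⬝ᵥ powVec n c := by
  rw [← binomialMatrix_mulVec_powVec, dotProduct_mulVec]

end CommSemiring

theorem binomMat_eq_binomialMatrix {R : Type*} [CommRing R] (α β : R) :
    binomMat α β = binomialMatrix 33 α β := by
  ext i j
  rw [binomMat, binomialMatrix, of_apply, of_apply, ite_eq_left_iff, not_le]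
  intro hij
  rw [Nat.choose_eq_zero_of_lt hij, Nat.cast_zero, zero_mul, zero_mul]

theorem stmt1_general {R : Type*} [CommRing R] {n : ℕ} (v : Fin (n + 1) → R) (α β s t : R)
    (k : Fin n)
    (h : ∀ j, (v ᵥ* binomialMatrix (n + 1) α β) j =
      if j = k.castSucc then s else if j = Fin.last n then t else 0) (c : R) :
    (∑ j, v j * (α * c + β) ^ (j : ℕ)) - c ^ n * t = s * c ^ (k : ℕ) := by
  have hrow : v ᵥ* binomialMatrix (n + 1) α β =
      Pi.single k.castSucc s + Pi.single (Fin.last n) t := by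
    funext j
    rw [h, Pi.add_apply, Pi.single_apply, Pi.single_apply]
    rcases eq_or_ne j k.castSucc with rfl | hj
    · simp [k.castSucc_ne_last]
    · simp [hj]
  have heval : ∑ j, v j * (α * c + β) ^ (j : ℕ) = s * c ^ (k : ℕ) + t * c ^ n := by
    calc
      ∑ j, v j * (α * c + β) ^ (j : ℕ)
        = (v ᵥ* binomialMatrix (n + 1) α β) ⬝ᵥ powVec (n + 1) c :=
          dotProduct_powVec_mul_add v α β c
      _ = s * powVec (n + 1) c k.castSucc + t * powVec (n + 1) c (Fin.last n) := by
          rw [hrow, add_dotProduct, single_dotProduct, single_dotProduct]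
      _ = s * c ^ (k : ℕ) + t * c ^ n := rfl
  rw [heval, mul_comm t, add_sub_cancel_right]

theorem stmt1 (N : ℕ) (hN : 0 < N)
    (A : Matrix (Fin 32) (Fin 33) (ZMod N)) (α β : ZMod N)
    (t' r : Fin 32 → ZMod N) (π : Equiv.Perm (Fin 32)) (i : Fin 32)
    (h : ∀ j : Fin 33,
        (A * binomMat α β) i j =
          if j = Fin.castSucc (π i) then r (π i)
          else if j = Fin.last 32 then t' i
          else 0) :
    ∀ c : ZMod N,
      (∑ j : Fin 33, A i j * (α * c + β) ^ (j : ℕ)) - c ^ 32 * t' i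
        = r (π i) * c ^ ((π i : ℕ)) := by
  simp only [mul_apply_eq_vecMul, binomMat_eq_binomialMatrix] at h
  exact stmt1_general (A i) α β (r (π i)) (t' i) (π i) h
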